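/- Let g : ℝ^p → ℝ^m (m = p, just-identified) be twice continuously differentiable with Jacobian G, let W be an m×m symmetric positive definite matrix with λ_min(W) ≥ λ̲_W > 0 and λ_max(W) ≤ λ̄_W, let θ̂ satisfy G(θ̂)ᵀ W g(θ̂) = 0, suppose G is Lipschitz continuous with constant L ≥ 0 and σ_min[G(θ)] ≥ σ̲ > 0 for all ‖θ − θ̂‖ ≤ R_G. Fix γ ∈ (0,1) and γ̃ ∈ (0,γ), and set R = min(R_G, ((γ−γ̃)/γ)·σ̲·√(λ̲_W/λ̄_W)/L − (1/(σ̲·√λ̲_W))·‖g(θ̂)‖_W). Then for any θ_0 with ‖θ_0 − θ̂‖ ≤ R, the Gauss-Newton iterates θ_{k+1} = θ_k − γ[G(θ_k)ᵀ W G(θ_k)]⁻¹ G(θ_k)ᵀ W g(θ_k) satisfy ‖θ_{k+1} − θ̂‖ ≤ (1 − γ̃)‖θ_k − θ̂‖ ≤ (1 − γ̃)^{k+1}‖θ_0 − θ̂‖ for all k ≥ 0. -/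

import Mathlib

open Matrix Set MeasureTheory
open scoped BigOperators

noncomputable section

/-- Euclidean norm of a vector in `Fin n → ℝ`. -/
def enorm' {n : ℕ} (v : Fin n → ℝ) : ℝ := Real.sqrt (∑ i, v i ^ 2)

/-- Smallest singular value of a matrix. -/
def sigMin {m p : ℕ} (A : Matrix (Fin m) (Fin p) ℝ) : ℝ :=
  sInf {c : ℝ | ∃ v : Fin p → ℝ, enorm' v = 1 ∧ c = enorm' (A *ᵥ v)}

/-- Largest singular value of a matrix (operator norm). -/
def sigMax {m p : ℕ} (A : Matrix (Fin m) (Fin p) ℝ) : ℝ :=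
  sSup {c : ℝ | ∃ v : Fin p → ℝ, enorm' v = 1 ∧ c = enorm' (A *ᵥ v)}

/-- Smallest eigenvalue of a (symmetric) square matrix, via the Rayleigh quotient. -/
def lamMin {n : ℕ} (A : Matrix (Fin n) (Fin n) ℝ) : ℝ :=
  sInf {c : ℝ | ∃ v : Fin n → ℝ, enorm' v = 1 ∧ c = v ⬝ᵥ (A *ᵥ v)}

/-- Largest eigenvalue of a (symmetric) square matrix, via the Rayleigh quotient. -/
def lamMax {n : ℕ} (A : Matrix (Fin n) (Fin n) ℝ) : ℝ :=
  sSup {c : ℝ | ∃ v : Fin n → ℝ, enorm' v = 1 ∧ c = v ⬝ᵥ (A *ᵥ v)}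

/-- Weighted norm `‖v‖_W = √(vᵀ W v)`. -/
def wnorm {m : ℕ} (W : Matrix (Fin m) (Fin m) ℝ) (v : Fin m → ℝ) : ℝ :=
  Real.sqrt (v ⬝ᵥ (W *ᵥ v))

/-- A matrix viewed as a continuous linear map `ℝ^p → ℝ^m`. -/
def toCLM {m p : ℕ} (A : Matrix (Fin m) (Fin p) ℝ) : (Fin p → ℝ) →L[ℝ] (Fin m → ℝ) :=
  LinearMap.toContinuousLinearMap A.mulVecLin

/-!
With `m = p` and `σ_min[G(θ)] > 0` the Jacobian is invertible, so the Gauss-Newton direction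
`[GᵀWG]⁻¹GᵀWg` is the Newton direction `G⁻¹g` whatever the invertible weight `W`, and the first
order condition forces `g(θ̂) = 0`. By the mean value inequality the full Newton step leaves an
error `e` with `σ̲‖e‖ ≤ L‖θ - θ̂‖²`. The damped step averages the old error, with weight `1 - γ`,
and `e`, with weight `γ`, and `γL‖θ - θ̂‖ ≤ (γ - γ̃)σ̲` makes this average a contraction by the
factor `1 - γ̃`.
-/

open WithLp (toLp ofLp)
open scoped NNReal Matrix.Norms.L2Operator

section Newton

variable {E F : Type*} [NormedAddCommGroup E] [NormedSpace ℝ E]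
  [NormedAddCommGroup F] [NormedSpace ℝ F]
  {f : E → F} {f' : E → E →L[ℝ] F} {s : Set E} {L : ℝ≥0} {σ γ γt R : ℝ} {a x y δ : E}

theorem norm_image_sub_sub_le_of_lipschitzOnWith_hasFDerivWithinAt (hs : Convex ℝ s)
    (hf : ∀ z ∈ s, HasFDerivWithinAt f (f' z) s z) (hLip : LipschitzOnWith L f' s)
    (hx : x ∈ s) (hy : y ∈ s) :
    ‖f y - f x - f' x (y - x)‖ ≤ L * ‖y - x‖ ^ 2 := by
  have hsub : segment ℝ x y ⊆ s := hs.segment_subset hx hy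
  have hbound : ∀ z ∈ segment ℝ x y, ‖f' z - f' x‖ ≤ L * ‖y - x‖ := fun z hz =>
    (hLip.norm_sub_le (hsub hz) hx).trans <|
      mul_le_mul_of_nonneg_left (norm_sub_le_of_mem_segment hz) L.coe_nonneg
  rw [pow_two, ← mul_assoc]
  exact (convex_segment x y).norm_image_sub_le_of_norm_hasFDerivWithin_le'
    (fun z hz => (hf z (hsub hz)).mono hsub) hbound
    (left_mem_segment ℝ x y) (right_mem_segment ℝ x y)

theorem mul_norm_newton_step_sub_le (hs : Convex ℝ s)
    (hf : ∀ z ∈ s, HasFDerivWithinAt f (f' z) s z) (hLip : LipschitzOnWith L f' s)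
    (hσ : ∀ v, σ * ‖v‖ ≤ ‖f' x v‖) (hx : x ∈ s) (ha : a ∈ s) (hfa : f a = 0)
    (hδ : f' x δ = f x) :
    σ * ‖x - δ - a‖ ≤ L * ‖x - a‖ ^ 2 :=
  calc σ * ‖x - δ - a‖ ≤ ‖f' x (x - δ - a)‖ := hσ _
    _ = ‖f a - f x - f' x (a - x)‖ := by
      congr 1
      simp only [map_sub, hδ, hfa]
      abel
    _ ≤ L * ‖x - a‖ ^ 2 := by
      rw [norm_sub_rev x a]
      exact norm_image_sub_sub_le_of_lipschitzOnWith_hasFDerivWithinAt hs hf hLip hx ha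

theorem norm_sub_smul_sub_le (hγ₀ : 0 ≤ γ) (hγ₁ : γ ≤ 1) :
    ‖x - γ • δ - a‖ ≤ (1 - γ) * ‖x - a‖ + γ * ‖x - δ - a‖ :=
  calc
    ‖x - γ • δ - a‖ = ‖(1 - γ) • (x - a) + γ • (x - δ - a)‖ := by
      congr 1
      module
    _ ≤ (1 - γ) * ‖x - a‖ + γ * ‖x - δ - a‖ := by
      refine (norm_add_le _ _).trans_eq ?_
      rw [norm_smul_of_nonneg (sub_nonneg.2 hγ₁), norm_smul_of_nonneg hγ₀]

theorem norm_damped_newton_step_sub_le (hs : Convex ℝ s)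
    (hf : ∀ z ∈ s, HasFDerivWithinAt f (f' z) s z) (hLip : LipschitzOnWith L f' s)
    (hσ₀ : 0 < σ) (hσ : ∀ v, σ * ‖v‖ ≤ ‖f' x v‖) (hx : x ∈ s) (ha : a ∈ s) (hfa : f a = 0)
    (hδ : f' x δ = f x) (hγ₀ : 0 ≤ γ) (hγ₁ : γ ≤ 1)
    (hxa : γ * (L * ‖x - a‖) ≤ (γ - γt) * σ) :
    ‖x - γ • δ - a‖ ≤ (1 - γt) * ‖x - a‖ := by
  have hnewton : γ * ‖x - δ - a‖ ≤ (γ - γt) * ‖x - a‖ := by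
    refine le_of_mul_le_mul_left ?_ hσ₀
    calc σ * (γ * ‖x - δ - a‖) = γ * (σ * ‖x - δ - a‖) := by ring
      _ ≤ γ * (L * ‖x - a‖ ^ 2) :=
        mul_le_mul_of_nonneg_left
          (mul_norm_newton_step_sub_le hs hf hLip hσ hx ha hfa hδ) hγ₀
      _ = γ * (L * ‖x - a‖) * ‖x - a‖ := by ring
      _ ≤ (γ - γt) * σ * ‖x - a‖ := by gcongr
      _ = σ * ((γ - γt) * ‖x - a‖) := by ring
  calc ‖x - γ • δ - a‖ ≤ (1 - γ) * ‖x - a‖ + γ * ‖x - δ - a‖ := norm_sub_smul_sub_le hγ₀ hγ₁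
    _ ≤ (1 - γ) * ‖x - a‖ + (γ - γt) * ‖x - a‖ := by gcongr
    _ = (1 - γt) * ‖x - a‖ := by ring

theorem geometric_decay_of_local_contraction {e : ℕ → ℝ} {q : ℝ} (he : ∀ k, 0 ≤ e k)
    (hq₀ : 0 ≤ q) (hq₁ : q ≤ 1) (h0 : e 0 ≤ R)
    (hstep : ∀ k, e k ≤ R → e (k + 1) ≤ q * e k) (k : ℕ) :
    e (k + 1) ≤ q * e k ∧ e (k + 1) ≤ q ^ (k + 1) * e 0 := by
  have hle : ∀ k, e k ≤ R := fun k => by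
    induction k with
    | zero => exact h0
    | succ k ih => exact (hstep k ih).trans ((mul_le_of_le_one_left (he k) hq₁).trans ih)
  exact ⟨hstep k (hle k), le_geom hq₀ (k + 1) fun j _ => hstep j (hle j)⟩

theorem damped_newton_local_convergence {N : E → E} {u : ℕ → E}
    (hf : ∀ z ∈ Metric.closedBall a R, HasFDerivWithinAt f (f' z) (Metric.closedBall a R) z)
    (hLip : LipschitzOnWith L f' (Metric.closedBall a R)) (hσ₀ : 0 < σ)
    (hσ : ∀ z ∈ Metric.closedBall a R, ∀ v, σ * ‖v‖ ≤ ‖f' z v‖) (hfa : f a = 0)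
    (hN : ∀ z ∈ Metric.closedBall a R, f' z (N z) = f z)
    (hγt : 0 ≤ γt) (hγtγ : γt ≤ γ) (hγ : γ ≤ 1) (hR : γ * (L * R) ≤ (γ - γt) * σ)
    (h0 : u 0 ∈ Metric.closedBall a R) (hu : ∀ k, u (k + 1) = u k - γ • N (u k)) (k : ℕ) :
    ‖u (k + 1) - a‖ ≤ (1 - γt) * ‖u k - a‖ ∧
      ‖u (k + 1) - a‖ ≤ (1 - γt) ^ (k + 1) * ‖u 0 - a‖ := by
  have hγ₀ : 0 ≤ γ := hγt.trans hγtγ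
  have ha : a ∈ Metric.closedBall a R :=
    Metric.mem_closedBall_self (Metric.nonneg_of_mem_closedBall h0)
  refine geometric_decay_of_local_contraction (e := fun k => ‖u k - a‖)
    (fun _ => norm_nonneg _) (by linarith) (by linarith) (mem_closedBall_iff_norm.1 h0)
    (fun j hj => ?_) k
  have huj : u j ∈ Metric.closedBall a R := mem_closedBall_iff_norm.2 hj
  rw [hu j]
  refine norm_damped_newton_step_sub_le (convex_closedBall a R) hf hLip hσ₀ (hσ _ huj)
    huj ha hfa (hN _ huj) hγ₀ hγ (le_trans ?_ hR)
  gcongr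

end Newton

section Euclidean

variable {m n : ℕ}

theorem enorm'_eq_norm_toLp (v : Fin n → ℝ) : enorm' v = ‖toLp 2 v‖ := by
  simp [enorm', EuclideanSpace.norm_eq]

theorem sigMax_eq_l2_opNorm (A : Matrix (Fin m) (Fin n) ℝ) : sigMax A = ‖A‖ := by
  rw [Matrix.l2_opNorm_def, ← ContinuousLinearMap.sSup_sphere_eq_norm, sigMax]
  congr 1
  ext c
  constructor
  · rintro ⟨v, hv, rfl⟩
    exact ⟨toLp 2 v, by simpa [enorm'_eq_norm_toLp] using hv, by simp [enorm'_eq_norm_toLp]⟩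
  · rintro ⟨v, hv, rfl⟩
    exact ⟨ofLp v, by simpa [enorm'_eq_norm_toLp] using hv, enorm'_eq_norm_toLp _ |>.symm⟩

theorem sigMin_mul_enorm'_le (A : Matrix (Fin m) (Fin n) ℝ) (v : Fin n → ℝ) :
    sigMin A * enorm' v ≤ enorm' (A *ᵥ v) := by
  rcases eq_or_ne v 0 with rfl | hv
  · simp [enorm']
  have hpos : 0 < enorm' v := by simpa [enorm'_eq_norm_toLp] using hv
  have hsmul {k : ℕ} (w : Fin k → ℝ) : enorm' ((enorm' v)⁻¹ • w) = (enorm' v)⁻¹ * enorm' w := by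
    rw [enorm'_eq_norm_toLp ((enorm' v)⁻¹ • w), enorm'_eq_norm_toLp w, WithLp.toLp_smul,
      norm_smul_of_nonneg (inv_nonneg.2 hpos.le)]
  have hunit : sigMin A ≤ enorm' (A *ᵥ ((enorm' v)⁻¹ • v)) :=
    csInf_le ⟨0, by rintro _ ⟨w, -, rfl⟩; exact Real.sqrt_nonneg _⟩
      ⟨_, by rw [hsmul, inv_mul_cancel₀ hpos.ne'], rfl⟩
  rwa [Matrix.mulVec_smul, hsmul, le_inv_mul_iff₀' hpos] at hunit

theorem isUnit_of_sigMin_pos {A : Matrix (Fin n) (Fin n) ℝ} (hA : 0 < sigMin A) : IsUnit A := by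
  rw [← Matrix.mulVec_injective_iff_isUnit, ← Matrix.coe_mulVecLin,
    injective_iff_map_eq_zero]
  intro v hv
  have hle : sigMin A * enorm' v ≤ 0 := by
    simpa [show A *ᵥ v = 0 from hv, enorm'] using sigMin_mul_enorm'_le A v
  have hnorm : ‖toLp 2 v‖ ≤ 0 := enorm'_eq_norm_toLp v ▸ nonpos_of_mul_nonpos_right hle hA
  simpa using hnorm

theorem abs_dotProduct_mulVec_le_of_enorm'_eq_one (A : Matrix (Fin n) (Fin n) ℝ)
    {v : Fin n → ℝ} (hv : enorm' v = 1) : |v ⬝ᵥ (A *ᵥ v)| ≤ ‖A‖ := by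
  have hnorm : ‖toLp 2 v‖ = 1 := enorm'_eq_norm_toLp v ▸ hv
  have hinner := abs_real_inner_le_norm (toLp 2 v) (Matrix.toEuclideanCLM (𝕜 := ℝ) A (toLp 2 v))
  rw [Matrix.inner_toEuclideanCLM, hnorm, one_mul] at hinner
  simpa [hnorm] using hinner.trans (Matrix.l2_opNorm_mulVec A (toLp 2 v))

theorem lamMin_le_lamMax (A : Matrix (Fin n) (Fin n) ℝ) : lamMin A ≤ lamMax A := by
  refine Real.sInf_le_sSup _ ⟨-‖A‖, ?_⟩ ⟨‖A‖, ?_⟩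
  · rintro _ ⟨v, hv, rfl⟩
    exact (abs_le.1 (abs_dotProduct_mulVec_le_of_enorm'_eq_one A hv)).1
  · rintro _ ⟨v, hv, rfl⟩
    exact (abs_le.1 (abs_dotProduct_mulVec_le_of_enorm'_eq_one A hv)).2

theorem hasFDerivAt_toLp_comp_comp_ofLp {g : (Fin n → ℝ) → (Fin n → ℝ)}
    {A : Matrix (Fin n) (Fin n) ℝ} {x : EuclideanSpace ℝ (Fin n)}
    (hg : HasFDerivAt g (toCLM A) (ofLp x)) :
    HasFDerivAt (fun y : EuclideanSpace ℝ (Fin n) => toLp 2 (g (ofLp y)))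
      (Matrix.toEuclideanCLM (𝕜 := ℝ) A) x :=
  (PiLp.hasFDerivAt_toLp (𝕜 := ℝ) 2 _).comp x (hg.comp x (PiLp.hasFDerivAt_ofLp (𝕜 := ℝ) 2 x))

end Euclidean

section GaussNewton

variable {ι κ α : Type*} [Fintype ι] [DecidableEq ι] [Fintype κ] [CommRing α]

/-- The Gauss-Newton direction for a Jacobian `A`, a weight `W` and a residual `b`, that is, the
solution `δ` of the normal equations `(AᵀWA) δ = AᵀWb`. It is meaningful only when `AᵀWA` is
invertible: `⁻¹` is `0` on singular matrices. -/
def gaussNewtonDirection (A : Matrix κ ι α) (W : Matrix κ κ α) (b : κ → α) : ι → α :=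
  (Aᵀ * W * A)⁻¹ *ᵥ (Aᵀ *ᵥ (W *ᵥ b))

variable {A W : Matrix ι ι α}

theorem gaussNewtonDirection_eq_inv_mulVec (hA : IsUnit A) (hW : IsUnit W) (b : ι → α) :
    gaussNewtonDirection A W b = A⁻¹ *ᵥ b := by
  have hdet : IsUnit (Aᵀ * W).det :=
    (Matrix.isUnit_iff_isUnit_det _).1 (((Matrix.isUnit_transpose A).2 hA).mul hW)
  rw [gaussNewtonDirection, Matrix.mulVec_mulVec b, Matrix.mulVec_mulVec b, Matrix.mul_inv_rev,
    Matrix.nonsing_inv_mul_cancel_right _ _ hdet]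

theorem mulVec_gaussNewtonDirection (hA : IsUnit A) (hW : IsUnit W) (b : ι → α) :
    A *ᵥ gaussNewtonDirection A W b = b := by
  rw [gaussNewtonDirection_eq_inv_mulVec hA hW, Matrix.mulVec_mulVec,
    Matrix.mul_nonsing_inv _ ((Matrix.isUnit_iff_isUnit_det A).1 hA), Matrix.one_mulVec]

theorem eq_zero_of_transpose_mulVec_mulVec_eq_zero (hA : IsUnit A) (hW : IsUnit W) {b : ι → α}
    (hb : Aᵀ *ᵥ (W *ᵥ b) = 0) : b = 0 := by
  simpa [gaussNewtonDirection, hb] using (mulVec_gaussNewtonDirection hA hW b).symm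

end GaussNewton

theorem mul_mul_le_of_le_gaussNewton_radius {σ γ γt q c L R : ℝ} (hσ : 0 ≤ σ) (hγ : 0 < γ)
    (hγt : γt ≤ γ) (hq : q ≤ 1) (hc : 0 ≤ c) (hL : 0 ≤ L)
    (hR : R ≤ (γ - γt) / γ * σ * q / L - c) : γ * (L * R) ≤ (γ - γt) * σ := by
  have hpos : 0 ≤ (γ - γt) / γ * σ := mul_nonneg (div_nonneg (sub_nonneg.2 hγt) hγ.le) hσ
  have hLR : L * R ≤ (γ - γt) / γ * σ := by
    rcases hL.eq_or_lt with rfl | hL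
    · simpa using hpos
    · calc L * R ≤ L * ((γ - γt) / γ * σ * q / L) := by gcongr; linarith
        _ = (γ - γt) / γ * σ * q := mul_div_cancel₀ _ hL.ne'
        _ ≤ (γ - γt) / γ * σ := mul_le_of_le_one_right hpos hq
  calc γ * (L * R) ≤ γ * ((γ - γt) / γ * σ) := by gcongr
    _ = (γ - γt) * σ := by field_simp

theorem gauss_newton_local_convergence_general {p : ℕ} {g : (Fin p → ℝ) → (Fin p → ℝ)}
    {G : (Fin p → ℝ) → Matrix (Fin p) (Fin p) ℝ} {W : Matrix (Fin p) (Fin p) ℝ}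
    {θhat : Fin p → ℝ} {L σlo γ γt R : ℝ} {θseq : ℕ → (Fin p → ℝ)}
    (hG : ∀ θ, enorm' (θ - θhat) ≤ R → HasFDerivAt g (toCLM (G θ)) θ)
    (hW : IsUnit W) (hfoc : (G θhat)ᵀ *ᵥ (W *ᵥ g θhat) = 0) (hL : 0 ≤ L)
    (hLip : ∀ θ₁ θ₂, enorm' (θ₁ - θhat) ≤ R → enorm' (θ₂ - θhat) ≤ R →
      sigMax (G θ₁ - G θ₂) ≤ L * enorm' (θ₁ - θ₂))
    (hσpos : 0 < σlo) (hσ : ∀ θ, enorm' (θ - θhat) ≤ R → σlo ≤ sigMin (G θ))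
    (hγt : 0 ≤ γt) (hγtγ : γt ≤ γ) (hγ : γ ≤ 1) (hR : γ * (L * R) ≤ (γ - γt) * σlo)
    (h0 : enorm' (θseq 0 - θhat) ≤ R)
    (hrec : ∀ k, θseq (k + 1) = θseq k - γ • gaussNewtonDirection (G (θseq k)) W (g (θseq k)))
    (k : ℕ) :
    enorm' (θseq (k + 1) - θhat) ≤ (1 - γt) * enorm' (θseq k - θhat)
      ∧ enorm' (θseq (k + 1) - θhat) ≤ (1 - γt) ^ (k + 1) * enorm' (θseq 0 - θhat) := by
  lift L to ℝ≥0 using hL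
  have hball (x : EuclideanSpace ℝ (Fin p)) :
      x ∈ Metric.closedBall (toLp 2 θhat) R ↔ enorm' (ofLp x - θhat) ≤ R := by
    rw [mem_closedBall_iff_norm, enorm'_eq_norm_toLp, WithLp.toLp_sub, WithLp.toLp_ofLp]
  have hunit (θ) (hθ : enorm' (θ - θhat) ≤ R) : IsUnit (G θ) :=
    isUnit_of_sigMin_pos (hσpos.trans_le (hσ θ hθ))
  have hg0 : g θhat = 0 := by
    refine eq_zero_of_transpose_mulVec_mulVec_eq_zero (hunit θhat ?_) hW hfoc
    simpa [enorm'] using (Real.sqrt_nonneg _).trans h0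
  let g' : EuclideanSpace ℝ (Fin p) → EuclideanSpace ℝ (Fin p) := fun x => toLp 2 (g (ofLp x))
  let G' : EuclideanSpace ℝ (Fin p) → EuclideanSpace ℝ (Fin p) →L[ℝ] EuclideanSpace ℝ (Fin p) :=
    fun x => Matrix.toEuclideanCLM (𝕜 := ℝ) (G (ofLp x))
  have hLip' : LipschitzOnWith L G' (Metric.closedBall (toLp 2 θhat) R) := by
    refine .of_dist_le_mul fun x hx y hy => ?_
    rw [dist_eq_norm, dist_eq_norm, ← map_sub, Matrix.l2_opNorm_toEuclideanCLM]
    simpa [sigMax_eq_l2_opNorm, enorm'_eq_norm_toLp] using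
      hLip _ _ ((hball x).1 hx) ((hball y).1 hy)
  have hσ' : ∀ x ∈ Metric.closedBall (toLp 2 θhat) R, ∀ v, σlo * ‖v‖ ≤ ‖G' x v‖ := fun x hx v => by
    have hmin := sigMin_mul_enorm'_le (G (ofLp x)) (ofLp v)
    rw [enorm'_eq_norm_toLp, enorm'_eq_norm_toLp] at hmin
    exact (mul_le_mul_of_nonneg_right (hσ _ ((hball x).1 hx)) (norm_nonneg v)).trans hmin
  simp only [enorm'_eq_norm_toLp, WithLp.toLp_sub]
  exact damped_newton_local_convergence (f := g') (u := fun k => toLp 2 (θseq k))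
    (N := fun x => toLp 2 (gaussNewtonDirection (G (ofLp x)) W (g (ofLp x))))
    (fun x hx => hasFDerivAt_toLp_comp_comp_ofLp (hG _ ((hball x).1 hx)) |>.hasFDerivWithinAt)
    hLip' hσpos hσ' (congrArg (toLp 2) hg0)
    (fun x hx => congrArg (toLp 2) (mulVec_gaussNewtonDirection (hunit _ ((hball x).1 hx)) hW _))
    hγt hγtγ hγ hR ((hball _).2 h0) (fun k => congrArg (toLp 2) (hrec k)) k

/-- Local convergence of Gauss-Newton for a just-identified GMM model. -/
theorem gauss_newton_local_convergence
    {p : ℕ}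
    (g : (Fin p → ℝ) → (Fin p → ℝ))
    (G : (Fin p → ℝ) → Matrix (Fin p) (Fin p) ℝ)
    (W : Matrix (Fin p) (Fin p) ℝ)
    (θhat : Fin p → ℝ)
    (L σlo RG γ γt Wlo Whi R : ℝ)
    (hg : ContDiff ℝ 2 g)
    (hG : ∀ θ, HasFDerivAt g (toCLM (G θ)) θ)
    (hW : W.PosDef)
    (hWlo : 0 < Wlo) (hWmin : Wlo ≤ lamMin W) (hWmax : lamMax W ≤ Whi)
    (hfoc : (G θhat)ᵀ *ᵥ (W *ᵥ g θhat) = 0)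
    (hL : 0 ≤ L)
    (hLip : ∀ θ₁ θ₂, sigMax (G θ₁ - G θ₂) ≤ L * enorm' (θ₁ - θ₂))
    (hσpos : 0 < σlo)
    (hσ : ∀ θ, enorm' (θ - θhat) ≤ RG → σlo ≤ sigMin (G θ))
    (hγ : γ ∈ Set.Ioo (0 : ℝ) 1) (hγt : γt ∈ Set.Ioo (0 : ℝ) γ)
    (hR : R = min RG (((γ - γt) / γ) * σlo * Real.sqrt (Wlo / Whi) / L
          - (1 / (σlo * Real.sqrt Wlo)) * wnorm W (g θhat)))
    (θseq : ℕ → (Fin p → ℝ))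
    (h0 : enorm' (θseq 0 - θhat) ≤ R)
    (hrec : ∀ k, θseq (k + 1) = θseq k
      - γ • (((G (θseq k))ᵀ * W * G (θseq k))⁻¹ *ᵥ ((G (θseq k))ᵀ *ᵥ (W *ᵥ g (θseq k))))) :
    ∀ k, enorm' (θseq (k + 1) - θhat) ≤ (1 - γt) * enorm' (θseq k - θhat)
      ∧ enorm' (θseq (k + 1) - θhat) ≤ (1 - γt) ^ (k + 1) * enorm' (θseq 0 - θhat) := by
  have hWle : Wlo ≤ Whi := hWmin.trans ((lamMin_le_lamMax W).trans hWmax)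
  have hratio : Real.sqrt (Wlo / Whi) ≤ 1 :=
    Real.sqrt_le_one.2 (div_le_one_of_le₀ hWle (hWlo.le.trans hWle))
  have hRG : R ≤ RG := hR.trans_le (min_le_left _ _)
  have hradius : γ * (L * R) ≤ (γ - γt) * σlo :=
    mul_mul_le_of_le_gaussNewton_radius hσpos.le hγ.1 hγt.2.le hratio
      (mul_nonneg (by positivity) (Real.sqrt_nonneg _)) hL (hR.trans_le (min_le_right _ _))
  exact gauss_newton_local_convergence_general (fun θ _ => hG θ) hW.isUnit hfoc hL
    (fun θ₁ θ₂ _ _ => hLip θ₁ θ₂) hσpos (fun θ hθ => hσ θ (hθ.trans hRG)) hγt.1.le hγt.2.le hγ.2.le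
    hradius h0 hrec
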